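/- Let Z = {P₁,…,P_s} be a finite set of distinct points of X = ℙ¹×ℙ¹ with radical ideal I. If α⁺(I^{(m+1)}) = α⁺(I^{(m)}) + 1 for some integer m ≥ 1, then all the points P₁,…,P_s lie on a single vertical or horizontal fiber; that is, either all Pᵢ have the same first coordinate in ℙ¹, or all Pᵢ have the same second coordinate in ℙ¹. -/

import Mathlib

open MvPolynomial

noncomputable section

/-- The bi-graded polynomial ring `ℂ[x₀,x₁,y₀,y₁]`:
the first `Fin 2` summand indexes the variables `x₀,x₁`,
the second the variables `y₀,y₁`. -/
abbrev R4 : Type := MvPolynomial (Fin 2 ⊕ Fin 2) ℂ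

/-- The weight function giving the bi-grading of `R4`. -/
def biWeight : Fin 2 ⊕ Fin 2 → ℕ × ℕ := Sum.elim (fun _ => (1, 0)) (fun _ => (0, 1))

/-- `F` is a (possibly zero) form of bidegree `(p,q)`, i.e. homogeneous of degree `p`
in `x₀,x₁` and homogeneous of degree `q` in `y₀,y₁`. -/
def IsBiForm (F : R4) (p q : ℕ) : Prop :=
  IsWeightedHomogeneous biWeight F (p, q)

/-- The projective line `ℙ¹` over `ℂ`. -/
abbrev ProjLine := Projectivization ℂ (Fin 2 → ℂ)

/-- The bi-homogeneous prime ideal of a point `P = ([a:b],[c:d])` of `X = ℙ¹ × ℙ¹`,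
generated by `b·x₀ - a·x₁` and `d·y₀ - c·y₁`. -/
def pointIdeal (P : ProjLine × ProjLine) : Ideal R4 :=
  Ideal.span
    { C (P.1.rep 1) * X (Sum.inl 0) - C (P.1.rep 0) * X (Sum.inl 1),
      C (P.2.rep 1) * X (Sum.inr 0) - C (P.2.rep 0) * X (Sum.inr 1) }

/-- The `m`-th symbolic power of the radical ideal of the finite set of points `Z ⊂ X`:
`I^{(m)} = ⋂_{P ∈ Z} I(P)^m`.  For `m = 1` this is the radical ideal `I = I(Z)` itself. -/
def symbPow (Z : Finset (ProjLine × ProjLine)) (m : ℕ) : Ideal R4 :=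
  ⨅ P ∈ Z, pointIdeal P ^ m

/-- `α*(J)`: the least `t ≥ 0` such that `J` contains a nonzero form of bidegree `(t,t)`. -/
def alphaStar (J : Ideal R4) : ℕ :=
  sInf {t : ℕ | ∃ F ∈ J, F ≠ 0 ∧ IsBiForm F t t}

/-- `α⁺(J)`: the least `d ≥ 0` such that `J` contains a nonzero form of bidegree `(p,q)`
with `p + q = d`. -/
def alphaPlus (J : Ideal R4) : ℕ :=
  sInf {d : ℕ | ∃ p q : ℕ, p + q = d ∧ ∃ F ∈ J, F ≠ 0 ∧ IsBiForm F p q}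

abbrev R2 : Type := MvPolynomial (Fin 2) ℂ

/-- translation moving `P` to the origin -/
def tau (P : Fin 2 → ℂ) : R2 →ₐ[ℂ] R2 := aeval (fun i => X i + C (P i))

/-- the order of vanishing of `f` at `P` -/
def ordP (P : Fin 2 → ℂ) (f : R2) : ℕ∞ := ((tau P f : R2) : MvPowerSeries (Fin 2) ℂ).order

lemma tau_tau (P : Fin 2 → ℂ) (f : R2) : tau (-P) (tau P f) = f := by
  have : ((tau (-P)).comp (tau P)) = AlgHom.id ℂ R2 := by
    apply MvPolynomial.algHom_ext
    intro i
    simp [tau]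
  exact DFunLike.congr_fun this f

lemma tau_tau' (P : Fin 2 → ℂ) (f : R2) : tau P (tau (-P) f) = f := by
  simpa using tau_tau (-P) f

lemma tau_injective (P : Fin 2 → ℂ) : Function.Injective (tau P) :=
  Function.LeftInverse.injective (tau_tau P)

lemma le_ordP_iff {P : Fin 2 → ℂ} {f : R2} {n : ℕ} :
    (n : ℕ∞) ≤ ordP P f ↔ ∀ d : Fin 2 →₀ ℕ, d.degree < n → coeff d (tau P f) = 0 := by
  constructor
  · intro h d hd
    have := MvPowerSeries.coeff_of_lt_order (f := ((tau P f : R2) : MvPowerSeries (Fin 2) ℂ)) (d := d)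
      (lt_of_lt_of_le (by exact_mod_cast hd) h)
    simpa using this
  · intro h
    apply MvPowerSeries.nat_le_order
    intro d hd
    simpa using h d hd

lemma ordP_mul (P : Fin 2 → ℂ) (f g : R2) : ordP P (f * g) = ordP P f + ordP P g := by
  simp [ordP, MvPowerSeries.order_mul]

lemma ordP_add (P : Fin 2 → ℂ) (f g : R2) : min (ordP P f) (ordP P g) ≤ ordP P (f + g) := by
  simpa [ordP] using MvPowerSeries.min_order_le_add

lemma ordP_zero (P : Fin 2 → ℂ) : ordP P 0 = ⊤ := by
  simp [ordP]

lemma ordP_ne_top {P : Fin 2 → ℂ} {f : R2} (hf : f ≠ 0) : ordP P f ≠ ⊤ := by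
  intro h
  apply hf
  apply tau_injective P
  have := MvPowerSeries.order_eq_top_iff.1 h
  rw [map_zero]
  exact_mod_cast this

/-- The ideal of polynomials vanishing to order at least `k` at `P`. -/
def ordIdeal (P : Fin 2 → ℂ) (k : ℕ) : Ideal R2 where
  carrier := {f | (k : ℕ∞) ≤ ordP P f}
  add_mem' := fun {a b} ha hb => le_trans (le_min ha hb) (ordP_add P a b)
  zero_mem' := by simp [ordP_zero]
  smul_mem' := fun c x hx => by
    simp only [smul_eq_mul, Set.mem_ofPred_eq, ordP_mul] at *
    exact le_trans hx le_add_self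

lemma mem_ordIdeal {P : Fin 2 → ℂ} {k : ℕ} {f : R2} :
    f ∈ ordIdeal P k ↔ (k : ℕ∞) ≤ ordP P f := Iff.rfl

lemma ordP_eq_zero_iff {P : Fin 2 → ℂ} {f : R2} : ordP P f = 0 ↔ eval P f ≠ 0 := by
  have h1 : constantCoeff (tau P f) = eval P f := by
    have : (constantCoeff : R2 →+* ℂ).comp (tau P : R2 →+* R2) = eval P := by
      apply MvPolynomial.ringHom_ext <;> simp [tau]
    exact DFunLike.congr_fun this f
  rw [← h1, ne_eq, ← not_iff_not, not_not, ordP, ← ne_eq,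
    MvPowerSeries.order_ne_zero_iff_constCoeff_eq_zero]
  simp [← MvPowerSeries.coeff_zero_eq_constantCoeff_apply, constantCoeff_eq]

lemma one_le_ordP_X (P : Fin 2 → ℂ) (i : Fin 2) : 1 ≤ ordP P (X i - C (P i)) := by
  rw [Order.one_le_iff_ne_zero, ne_eq, ordP_eq_zero_iff]
  simp

lemma ordP_pow (P : Fin 2 → ℂ) (f : R2) (n : ℕ) : ordP P (f ^ n) = n * ordP P f := by
  induction n with
  | zero => simp [ordP_eq_zero_iff]
  | succ n ih => rw [pow_succ, ordP_mul, ih]; push_cast; ring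

lemma ordP_X (P : Fin 2 → ℂ) (i : Fin 2) : ordP P (X i - C (P i)) = 1 := by
  have : tau P (X i - C (P i)) = X i := by simp [tau]
  rw [ordP, this, coe_X, MvPowerSeries.X, MvPowerSeries.order_monomial_of_ne_zero one_ne_zero]
  simp

lemma tau_pderiv (P : Fin 2 → ℂ) (i : Fin 2) (f : R2) :
    tau P (pderiv i f) = pderiv i (tau P f) := by
  induction f using MvPolynomial.induction_on with
  | C a => simp [tau]
  | add p q hp hq => simp [hp, hq]
  | mul_X p j hp =>
    have h : tau P (X j) = X j + C (P j) := by simp [tau]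
    have h2 : tau P (pderiv i (X j)) = pderiv i (X j) := by
      by_cases hij : j = i
      · subst hij; simp
      · simp [pderiv_X_of_ne hij]
    rw [pderiv_mul, map_add, map_mul, map_mul, map_mul, pderiv_mul, hp, h, h2]
    simp

lemma ordP_pderiv (P : Fin 2 → ℂ) (i : Fin 2) (f : R2) (n : ℕ)
    (h : ((n + 1 : ℕ) : ℕ∞) ≤ ordP P f) : (n : ℕ∞) ≤ ordP P (pderiv i f) := by
  rw [le_ordP_iff] at *
  intro d hd
  rw [tau_pderiv, coeff_pderiv, h, zero_mul]
  simpa using hd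

lemma ordIdeal_coprime {P Q : Fin 2 → ℂ} (h : P ≠ Q) (k l : ℕ) :
    IsCoprime (ordIdeal P k) (ordIdeal Q l) := by
  obtain ⟨i, hi⟩ := Function.ne_iff.1 h
  have h1 : IsCoprime (X i - C (P i) : R2) (X i - C (Q i)) := by
    refine ⟨C ((Q i - P i)⁻¹), - C ((Q i - P i)⁻¹), ?_⟩
    have : Q i - P i ≠ 0 := sub_ne_zero.2 (Ne.symm hi)
    have h2 : (C ((Q i - P i)⁻¹) : R2) * C (Q i - P i) = 1 := by
      rw [← C_mul, inv_mul_cancel₀ this, C_1]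
    rw [C_sub] at h2
    linear_combination h2
  have h2 : IsCoprime ((X i - C (P i) : R2) ^ k) ((X i - C (Q i)) ^ l) := h1.pow
  obtain ⟨a, b, hab⟩ := h2
  rw [Ideal.isCoprime_iff_exists]
  refine ⟨_, ?_, _, ?_, hab⟩
  · apply Ideal.mul_mem_left
    rw [mem_ordIdeal, ordP_pow, ordP_X, mul_one]
  · apply Ideal.mul_mem_left
    rw [mem_ordIdeal, ordP_pow, ordP_X, mul_one]

/-! ### Boxes -/

/-- polynomials with `deg_x < M`, `deg_y < N` -/
def box (M N : ℕ) : Submodule ℂ R2 := restrictSupport ℂ {d | d 0 < M ∧ d 1 < N}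

lemma mem_box {M N : ℕ} {f : R2} : f ∈ box M N ↔ ∀ d ∈ f.support, d 0 < M ∧ d 1 < N := by
  rw [box, mem_restrictSupport_iff]; rfl

lemma mem_box_of_degreeOf {M N : ℕ} {f : R2} (h0 : degreeOf 0 f < M) (h1 : degreeOf 1 f < N) :
    f ∈ box M N := by
  rw [mem_box]
  intro d hd
  exact ⟨(monomial_le_degreeOf 0 hd).trans_lt h0, (monomial_le_degreeOf 1 hd).trans_lt h1⟩

lemma degreeOf_of_mem_box {M N : ℕ} {f : R2} (h : f ∈ box M N) (hf : f ≠ 0) :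
    degreeOf 0 f < M ∧ degreeOf 1 f < N := by
  rw [mem_box] at h
  obtain ⟨d, hd⟩ := (support_nonempty).2 hf
  have := h d hd
  exact ⟨(degreeOf_lt_iff (by omega)).2 fun e he => (h e he).1,
    (degreeOf_lt_iff (by omega)).2 fun e he => (h e he).2⟩

def boxEquiv (M N : ℕ) : {d : Fin 2 →₀ ℕ | d 0 < M ∧ d 1 < N} ≃ Fin M × Fin N where
  toFun d := (⟨d.1 0, d.2.1⟩, ⟨d.1 1, d.2.2⟩)
  invFun x := ⟨Finsupp.single 0 x.1.1 + Finsupp.single 1 x.2.1, by simp⟩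
  left_inv d := by
    ext i
    fin_cases i <;> simp
  right_inv x := by
    ext <;> simp

instance (M N : ℕ) : Finite {d : Fin 2 →₀ ℕ | d 0 < M ∧ d 1 < N} :=
  Finite.of_equiv _ (boxEquiv M N).symm

instance (M N : ℕ) : FiniteDimensional ℂ (box M N) :=
  Module.Basis.finiteDimensional_of_finite (basisRestrictSupport ℂ _)

lemma finrank_box (M N : ℕ) : Module.finrank ℂ (box M N) = M * N := by
  rw [box, Module.finrank_eq_nat_card_basis (basisRestrictSupport ℂ _), Nat.card_congr (boxEquiv M N)]
  simp

/-! ### Taylor coefficients -/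

abbrev Tri (k : ℕ) : Type := (i : Fin k) × Fin (i.1 + 1)

lemma card_Tri (k : ℕ) : 2 * Fintype.card (Tri k) = k * (k + 1) := by
  rw [Fintype.card_sigma]
  simp only [Fintype.card_fin]
  rw [Fin.sum_univ_eq_sum_range (fun i => i + 1) k]
  induction k with
  | zero => simp
  | succ n ih => rw [Finset.sum_range_succ, mul_add, ih]; ring

def triMon {k : ℕ} (x : Tri k) : Fin 2 →₀ ℕ :=
  Finsupp.single 0 x.2.1 + Finsupp.single 1 (x.1.1 - x.2.1)

lemma triMon_degree {k : ℕ} (x : Tri k) : (triMon x).degree = x.1.1 := by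
  have := x.2.2
  simp [triMon, Finsupp.degree_eq_sum]
  omega

lemma triMon_injective (k : ℕ) : Function.Injective (triMon (k := k)) := by
  rintro ⟨i, j⟩ ⟨i', j'⟩ h
  have h0 := DFunLike.congr_fun h 0
  have h1 := triMon_degree (⟨i, j⟩ : Tri k)
  rw [h, triMon_degree] at h1
  simp [triMon] at h0
  simp at h1
  have : i = i' := Fin.ext h1.symm
  subst this
  simp
  exact Fin.ext h0

lemma exists_triMon {k : ℕ} (d : Fin 2 →₀ ℕ) (hd : d.degree < k) : ∃ x : Tri k, triMon x = d := by
  have : d.degree = d 0 + d 1 := by simp [Finsupp.degree_eq_sum]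
  refine ⟨⟨⟨d.degree, hd⟩, ⟨d 0, by simp; omega⟩⟩, ?_⟩
  ext i
  fin_cases i <;> simp [triMon] <;> omega

/-- Taylor coefficients of order `< k` at `P`. -/
def taylorMap (P : Fin 2 → ℂ) (k : ℕ) : R2 →ₗ[ℂ] (Tri k → ℂ) :=
  LinearMap.pi fun x => (lcoeff ℂ (triMon x)).comp (tau P).toLinearMap

lemma taylorMap_eq_zero {P : Fin 2 → ℂ} {k : ℕ} {f : R2} :
    taylorMap P k f = 0 ↔ (k : ℕ∞) ≤ ordP P f := by
  rw [le_ordP_iff]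
  constructor
  · intro h d hd
    obtain ⟨x, rfl⟩ := exists_triMon d hd
    exact congrFun h x
  · intro h
    ext x
    exact h _ (by rw [triMon_degree]; exact x.1.2)

lemma taylorMap_surjective (P : Fin 2 → ℂ) (k : ℕ) : Function.Surjective (taylorMap P k) := by
  classical
  intro e
  refine ⟨tau (-P) (∑ x, monomial (triMon x) (e x)), ?_⟩
  ext x
  simp only [taylorMap, LinearMap.pi_apply, LinearMap.comp_apply, AlgHom.toLinearMap_apply,
    tau_tau', lcoeff_apply, coeff_sum, coeff_monomial, (triMon_injective k).eq_iff]
  simp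

lemma mul_mem_box {M N a b : ℕ} {A g : R2} (hA : A ∈ box M N) (h0 : degreeOf 0 g ≤ a)
    (h1 : degreeOf 1 g ≤ b) : A * g ∈ box (M + a) (N + b) := by
  by_cases hz : A = 0
  · simp [hz]
  obtain ⟨hA0, hA1⟩ := degreeOf_of_mem_box hA hz
  apply mem_box_of_degreeOf
  · have := degreeOf_mul_le 0 A g
    omega
  · have := degreeOf_mul_le 1 A g
    omega

lemma box_mono {M N M' N' : ℕ} (h : M ≤ M') (h' : N ≤ N') : box M N ≤ box M' N' := by
  intro f hf
  rw [mem_box] at *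
  intro d hd
  have := hf d hd
  omega

/-- the joint Taylor map -/
def multiTaylor (S : Finset (Fin 2 → ℂ)) (k : (Fin 2 → ℂ) → ℕ) :
    R2 →ₗ[ℂ] ((P : S) → Tri (k P) → ℂ) :=
  LinearMap.pi fun P => taylorMap P (k P)

lemma multiTaylor_eq_zero {S : Finset (Fin 2 → ℂ)} {k : (Fin 2 → ℂ) → ℕ} {f : R2} :
    multiTaylor S k f = 0 ↔ ∀ P ∈ S, (k P : ℕ∞) ≤ ordP P f := by
  constructor
  · intro h P hP
    exact taylorMap_eq_zero.1 (congrFun h ⟨P, hP⟩)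
  · intro h
    funext P
    exact taylorMap_eq_zero.2 (h P P.2)

lemma multiTaylor_surjective (S : Finset (Fin 2 → ℂ)) (k : (Fin 2 → ℂ) → ℕ) :
    Function.Surjective (multiTaylor S k) := by
  intro e
  choose x hx using fun P : S => taylorMap_surjective P (k P) (e P)
  obtain ⟨r, hr⟩ := Ideal.exists_forall_sub_mem_ideal (I := fun P : S => ordIdeal P (k P))
    (fun P Q hPQ => ordIdeal_coprime (fun h => hPQ (Subtype.ext h)) _ _) x
  refine ⟨r, ?_⟩
  funext P
  have := taylorMap_eq_zero.2 (mem_ordIdeal.1 (hr P))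
  rw [map_sub, sub_eq_zero, hx] at this
  exact this

lemma multiTaylor_surjective_box (S : Finset (Fin 2 → ℂ)) (k : (Fin 2 → ℂ) → ℕ) (n₀ : ℕ) :
    ∃ n, n₀ ≤ n ∧ Function.Surjective ((multiTaylor S k).comp (box n n).subtype) := by
  classical
  let bs := Module.finBasis ℂ ((P : S) → Tri (k P) → ℂ)
  choose x hx using fun i => multiTaylor_surjective S k (bs i)
  let n := n₀ + ∑ i, (degreeOf 0 (x i) + degreeOf 1 (x i) + 1) + 1
  have hxn : ∀ i, x i ∈ box n n := by
    intro i
    have := Finset.single_le_sum (f := fun i => degreeOf 0 (x i) + degreeOf 1 (x i) + 1)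
      (fun _ _ => Nat.zero_le _) (Finset.mem_univ i)
    apply mem_box_of_degreeOf <;> omega
  refine ⟨n, by omega, ?_⟩
  rw [← LinearMap.range_eq_top, eq_top_iff, ← bs.span_eq, Submodule.span_le]
  rintro _ ⟨i, rfl⟩
  exact ⟨⟨x i, hxn i⟩, hx i⟩

lemma finrank_multi (S : Finset (Fin 2 → ℂ)) (k : (Fin 2 → ℂ) → ℕ) :
    2 * Module.finrank ℂ ((P : S) → Tri (k P) → ℂ) = ∑ P ∈ S, k P * (k P + 1) := by
  rw [Module.finrank_pi_fintype, Finset.mul_sum]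
  simp only [Module.finrank_fintype_fun_eq_card, card_Tri]
  exact Finset.sum_coe_sort S (fun P => k P * (k P + 1))

lemma finrank_range_le_comp {A B D : Type*} [AddCommGroup A] [Module ℂ A] [AddCommGroup B] [Module ℂ B]
    [AddCommGroup D] [Module ℂ D] [FiniteDimensional ℂ B] (T : B →ₗ[ℂ] D) (Ψ : A →ₗ[ℂ] B) :
    Module.finrank ℂ (LinearMap.range Ψ) ≤
      Module.finrank ℂ (LinearMap.range (T.comp Ψ)) + Module.finrank ℂ (LinearMap.ker T) := by
  have q := (T.domRestrict (LinearMap.range Ψ)).finrank_range_add_finrank_ker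
  have q1 : LinearMap.range (T.domRestrict (LinearMap.range Ψ)) = LinearMap.range (T.comp Ψ) := by
    rw [LinearMap.range_domRestrict, LinearMap.range_comp]
  have q2 : Module.finrank ℂ (LinearMap.ker (T.domRestrict (LinearMap.range Ψ))) ≤
      Module.finrank ℂ (LinearMap.ker T) := by
    have : (LinearMap.ker (T.domRestrict (LinearMap.range Ψ))).map (Submodule.subtype _) ≤
        LinearMap.ker T := by
      rintro _ ⟨x, hx, rfl⟩
      exact hx
    have q3 := Submodule.finrank_mono this
    rwa [Submodule.finrank_map_subtype_eq] at q3
  rw [q1] at q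
  omega

lemma bezout (S : Finset (Fin 2 → ℂ)) (g h : R2) (hg : Prime g) (hgh : ¬ g ∣ h) (a b : ℕ)
    (ha : 1 ≤ a) (hg0 : degreeOf 0 g = a) (hg1 : degreeOf 1 g = b)
    (hh0 : degreeOf 0 h ≤ a - 1) (hh1 : degreeOf 1 h ≤ b)
    (μ ν : (Fin 2 → ℂ) → ℕ) (hμ : ∀ P ∈ S, (μ P : ℕ∞) ≤ ordP P g)
    (hν : ∀ P ∈ S, (ν P : ℕ∞) ≤ ordP P h) :
    ∑ P ∈ S, μ P * ν P + b ≤ 2 * a * b := by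
  classical
  obtain ⟨n, hn, hsurj⟩ := multiTaylor_surjective_box S (fun P => μ P + ν P) (2 * a + 2 * b)
  set T := (multiTaylor S (fun P => μ P + ν P)).comp (box n n).subtype with hT
  let W := (box (n - a) (n - b)) × (box (n - a + 1) (n - b))
  let Ψ0 : W →ₗ[ℂ] R2 :=
    LinearMap.coprod ((LinearMap.mulRight ℂ g).comp (Submodule.subtype _))
      ((LinearMap.mulRight ℂ h).comp (Submodule.subtype _))
  have hΨ0 : ∀ w : W, Ψ0 w = w.1.1 * g + w.2.1 * h := fun w => rfl
  let Ψ : W →ₗ[ℂ] box n n := Ψ0.codRestrict _ (by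
    intro w
    rw [hΨ0]
    apply Submodule.add_mem
    · exact box_mono (by omega) (by omega) (mul_mem_box w.1.2 hg0.le hg1.le)
    · exact box_mono (by omega) (by omega) (mul_mem_box w.2.2 hh0 hh1))
  let U : W →ₗ[ℂ] ((P : S) → Tri (ν P) → ℂ) × ((P : S) → Tri (μ P) → ℂ) :=
    LinearMap.prodMap ((multiTaylor S ν).comp (Submodule.subtype _))
      ((multiTaylor S μ).comp (Submodule.subtype _))
  have hUker : LinearMap.ker U ≤ LinearMap.ker (T.comp Ψ) := by
    intro w hw
    rw [LinearMap.mem_ker] at *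
    have h1 : multiTaylor S ν w.1.1 = 0 := congrArg Prod.fst hw
    have h2 : multiTaylor S μ w.2.1 = 0 := congrArg Prod.snd hw
    rw [multiTaylor_eq_zero] at h1 h2
    change multiTaylor S (fun P => μ P + ν P) (w.1.1 * g + w.2.1 * h) = 0
    rw [multiTaylor_eq_zero]
    intro P hP
    refine le_trans (le_min ?_ ?_) (ordP_add P _ _)
    · rw [ordP_mul, add_comm (ordP P _)]; push_cast
      exact add_le_add (hμ P hP) (h1 P hP)
    · rw [ordP_mul]; push_cast
      exact add_le_add (h2 P hP) (hν P hP)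
  -- ranks
  have r1 := T.finrank_range_add_finrank_ker
  rw [LinearMap.range_eq_top.2 hsurj, finrank_top, finrank_box] at r1
  have r2 := U.finrank_range_add_finrank_ker
  have r3 := (T.comp Ψ).finrank_range_add_finrank_ker
  have r4 := Submodule.finrank_mono hUker
  have r5 := Submodule.finrank_le (LinearMap.range U)
  rw [Module.finrank_prod] at r5
  have r6 := Ψ.finrank_range_add_finrank_ker
  have r7 : Module.finrank ℂ (LinearMap.range Ψ) ≤
      Module.finrank ℂ (LinearMap.range (T.comp Ψ)) + Module.finrank ℂ (LinearMap.ker T) := by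
    exact finrank_range_le_comp T Ψ
  have r8 : Module.finrank ℂ (LinearMap.ker Ψ) ≤ (n - 2 * a + 1) * (n - 2 * b) := by
    let L0 : LinearMap.ker Ψ →ₗ[ℂ] R2 :=
      ((Submodule.subtype _).comp (LinearMap.snd ℂ _ _)).comp (Submodule.subtype _)
    have hker : ∀ w : LinearMap.ker Ψ, w.1.1.1 * g + w.1.2.1 * h = 0 := by
      intro w
      have := w.2
      rw [LinearMap.mem_ker] at this
      exact congrArg Subtype.val this
    have hL0 : ∀ w, L0 w ∈ (box (n - 2 * a + 1) (n - 2 * b)).map (LinearMap.mulLeft ℂ g) := by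
      intro w
      have h1 := hker w
      have h2 : g ∣ w.1.2.1 * h := ⟨- w.1.1.1, by linear_combination h1⟩
      obtain ⟨B, hB⟩ := (hg.dvd_or_dvd h2).resolve_right hgh
      refine ⟨B, ?_, hB.symm⟩
      by_cases hz : B = 0
      · rw [hz]; exact Submodule.zero_mem _
      have hm := w.1.2.2
      rw [hB] at hm
      have := degreeOf_of_mem_box hm (mul_ne_zero hg.ne_zero hz)
      rw [degreeOf_mul_eq hg.ne_zero hz, degreeOf_mul_eq hg.ne_zero hz] at this
      apply mem_box_of_degreeOf <;> omega
    let L := L0.codRestrict _ hL0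
    have hL : Function.Injective L := by
      intro w w' hw
      have h2' := congrArg Subtype.val hw
      have h2 : w.1.2.1 = w'.1.2.1 := h2'
      have h1 := hker w
      have h1' := hker w'
      rw [h2] at h1
      have h3 : w.1.1.1 = w'.1.1.1 := mul_right_cancel₀ hg.ne_zero (by linear_combination h1 - h1')
      exact Subtype.ext (Prod.ext (Subtype.ext h3) (Subtype.ext h2))
    have := LinearMap.finrank_le_finrank_of_injective hL
    refine this.trans ((Submodule.finrank_map_le _ _).trans ?_)
    rw [finrank_box]
  have hW : Module.finrank ℂ W = (n - a) * (n - b) + (n - a + 1) * (n - b) := by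
    rw [Module.finrank_prod, finrank_box, finrank_box]
  have e1 := finrank_multi S (fun P => μ P + ν P)
  have e2 := finrank_multi S μ
  have e3 := finrank_multi S ν
  have e4 : ∑ P ∈ S, (μ P + ν P) * (μ P + ν P + 1) =
      2 * ∑ P ∈ S, μ P * ν P + ∑ P ∈ S, μ P * (μ P + 1) + ∑ P ∈ S, ν P * (ν P + 1) := by
    rw [Finset.mul_sum, ← Finset.sum_add_distrib, ← Finset.sum_add_distrib]
    apply Finset.sum_congr rfl
    intro P _
    ring
  have e5 : n * n + (n - 2 * a + 1) * (n - 2 * b) + b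
      = (n - a) * (n - b) + (n - a + 1) * (n - b) + 2 * a * b := by
    obtain ⟨c, rfl⟩ := Nat.exists_eq_add_of_le hn
    rw [show 2 * a + 2 * b + c - 2 * a = 2 * b + c by omega,
      show 2 * a + 2 * b + c - 2 * b = 2 * a + c by omega,
      show 2 * a + 2 * b + c - a = a + 2 * b + c by omega,
      show 2 * a + 2 * b + c - b = 2 * a + b + c by omega]
    ring
  rw [hW] at r2 r3 r6
  omega

lemma pderiv_ne_zero {g : R2} {i : Fin 2} (h : 1 ≤ degreeOf i g) : pderiv i g ≠ 0 := by
  have h1 : ¬ (degreeOf i g < 1) := by omega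
  rw [degreeOf_lt_iff one_pos] at h1
  push Not at h1
  obtain ⟨m, hm, hmi⟩ := h1
  intro h0
  have := coeff_pderiv (i := i) g (m - Finsupp.single i 1)
  rw [h0, tsub_add_cancel_of_le (by simpa using hmi)] at this
  simp only [coeff_zero] at this
  have h2 := mem_support_iff.1 hm
  rcases mul_eq_zero.1 this.symm with h3 | h3
  · exact h2 h3
  · exact Nat.cast_add_one_ne_zero _ h3

lemma degreeOf_pderiv_self (g : R2) (i : Fin 2) : degreeOf i (pderiv i g) ≤ degreeOf i g - 1 := by
  rw [degreeOf_le_iff]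
  intro m hm
  have := mem_support_iff.1 hm
  rw [coeff_pderiv] at this
  have h := monomial_le_degreeOf i (mem_support_iff.2 (left_ne_zero_of_mul this))
  simp at h
  omega

lemma degreeOf_pderiv (g : R2) (i j : Fin 2) : degreeOf j (pderiv i g) ≤ degreeOf j g := by
  rw [degreeOf_le_iff]
  intro m hm
  have := mem_support_iff.1 hm
  rw [coeff_pderiv] at this
  have h := monomial_le_degreeOf j (mem_support_iff.2 (left_ne_zero_of_mul this))
  simp at h
  omega

/-- existence of adjoints -/
lemma exists_adjoint (S : Finset (Fin 2 → ℂ)) (g : R2) (hg : Prime g)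
    (h0 : 1 ≤ degreeOf 0 g) (h1 : 1 ≤ degreeOf 1 g) :
    ∃ H : R2, H ≠ 0 ∧ degreeOf 0 H < degreeOf 0 g ∧ degreeOf 1 H < degreeOf 1 g ∧
      ∀ P ∈ S, ordP P g ≤ ordP P H + 1 := by
  classical
  let μ : (Fin 2 → ℂ) → ℕ := fun P => (ordP P g).toNat
  have hμ : ∀ P, ordP P g = μ P := fun P => (ENat.natCast_toNat (ordP_ne_top hg.ne_zero)).symm
  have hd := pderiv_ne_zero h0
  have hdeg := degreeOf_pderiv_self g 0
  have hndvd : ¬ g ∣ pderiv 0 g := by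
    rintro ⟨c, hc⟩
    have hc0 : c ≠ 0 := by rintro rfl; simp at hc; exact hd hc
    have := degreeOf_mul_eq (n := 0) hg.ne_zero hc0
    rw [← hc] at this
    omega
  have hB := bezout S g (pderiv 0 g) hg hndvd _ _ h0 rfl rfl hdeg (degreeOf_pderiv g 0 1)
    μ (fun P => μ P - 1) (fun P _ => (hμ P).ge) (by
      intro P _
      rcases Nat.eq_zero_or_pos (μ P) with h | h
      · simp [h]
      · apply ordP_pderiv
        rw [hμ P, Nat.sub_add_cancel h])
  set a := degreeOf 0 g
  set b := degreeOf 1 g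
  let T := (multiTaylor S (fun P => μ P - 1)).comp (box a b).subtype
  have hk : LinearMap.ker T ≠ ⊥ := by
    apply LinearMap.ker_ne_bot_of_finrank_lt
    rw [finrank_box]
    have e := finrank_multi S (fun P => μ P - 1)
    have e2 : ∑ P ∈ S, (μ P - 1) * (μ P - 1 + 1) = ∑ P ∈ S, μ P * (μ P - 1) := by
      apply Finset.sum_congr rfl
      intro P _
      rcases Nat.eq_zero_or_pos (μ P) with h | h
      · simp [h]
      · rw [Nat.sub_add_cancel h, mul_comm]
    have e3 : 2 * a * b = 2 * (a * b) := by ring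
    omega
  obtain ⟨H, hH, hH0⟩ := Submodule.exists_mem_ne_zero_of_ne_bot hk
  have hH0' : H.1 ≠ 0 := fun h => hH0 (Subtype.ext h)
  refine ⟨H.1, hH0', (degreeOf_of_mem_box H.2 hH0').1, (degreeOf_of_mem_box H.2 hH0').2, ?_⟩
  have hH' : multiTaylor S (fun P => μ P - 1) H.1 = 0 := hH
  rw [multiTaylor_eq_zero] at hH'
  intro P hP
  rw [hμ]
  have := hH' P hP
  calc (μ P : ℕ∞) ≤ ((μ P - 1 : ℕ) : ℕ∞) + 1 := by
        norm_cast; omega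
    _ ≤ _ := by gcongr

/-- one-variable polynomials in the `i`-th variable -/
def emb (i : Fin 2) (u : Polynomial ℂ) : R2 := Polynomial.aeval (X i : R2) u

lemma emb_mul (i : Fin 2) (u v : Polynomial ℂ) : emb i (u * v) = emb i u * emb i v := by
  simp [emb]

lemma emb_lin (i : Fin 2) (s : ℂ) : emb i (Polynomial.X - Polynomial.C s) = X i - C s := by
  simp [emb, algebraMap_eq]

lemma eval_emb (P : Fin 2 → ℂ) (i : Fin 2) (u : Polynomial ℂ) : eval P (emb i u) = u.eval (P i) := by
  rw [emb]
  have := Polynomial.aeval_algHom_apply (aeval P : R2 →ₐ[ℂ] ℂ) (X i) u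
  rw [aeval_X] at this
  rw [← coe_aeval_eq_eval]
  change (aeval P : R2 →ₐ[ℂ] ℂ) _ = _
  rw [← this]
  rfl

lemma exists_emb {g : R2} {i j : Fin 2} (hij : i ≠ j) (h : degreeOf j g = 0) :
    ∃ u, g = emb i u := by
  refine ⟨∑ d ∈ g.support, Polynomial.monomial (d i) (coeff d g), ?_⟩
  conv_lhs => rw [g.as_sum]
  rw [emb, map_sum]
  apply Finset.sum_congr rfl
  intro d hd
  have h1 := monomial_le_degreeOf j hd
  rw [h] at h1
  have hd' : d = Finsupp.single i (d i) := by
    ext k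
    by_cases hk : k = i
    · subst hk; simp
    · have : k = j := by omega
      subst this
      rw [Finsupp.single_eq_of_ne hk]
      omega
  rw [Polynomial.aeval_monomial]
  conv_lhs => rw [hd']
  rw [← C_mul_X_pow_eq_monomial, ← hd', algebraMap_eq]

lemma ordP_emb (P : Fin 2 → ℂ) (i : Fin 2) {u : Polynomial ℂ} (hu : u ≠ 0) :
    ordP P (emb i u) = u.rootMultiplicity (P i) := by
  obtain ⟨q, hq, hq2⟩ := Polynomial.exists_eq_pow_rootMultiplicity_mul_and_not_dvd u hu (P i)
  have h1 : emb i u = (X i - C (P i)) ^ (u.rootMultiplicity (P i)) * emb i q := by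
    conv_lhs => rw [hq]
    rw [emb_mul, ← emb_lin]
    simp [emb]
  rw [h1, ordP_mul, ordP_pow, ordP_X]
  have : ordP P (emb i q) = 0 := by
    rw [ordP_eq_zero_iff, eval_emb]
    rwa [Polynomial.dvd_iff_isRoot] at hq2
  rw [this]; simp

lemma degreeOf_lin (i : Fin 2) (s : ℂ) : 1 ≤ degreeOf i (X i - C s : R2) := by
  have : Finsupp.single i 1 ∈ (X i - C s : R2).support := by
    have hne : (0 : Fin 2 →₀ ℕ) ≠ Finsupp.single i 1 := by
      intro h; simpa using DFunLike.congr_fun h i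
    rw [mem_support_iff, coeff_sub, coeff_C, if_neg hne]
    simp
  simpa using monomial_le_degreeOf i this

lemma emb_prod (i : Fin 2) (A : Finset ℂ) :
    emb i (∏ s ∈ A, (Polynomial.X - Polynomial.C s)) = ∏ s ∈ A, (X i - C s : R2) := by
  rw [emb, map_prod]
  apply Finset.prod_congr rfl
  intro s _
  exact emb_lin i s

lemma lin_ne_zero (i : Fin 2) (s : ℂ) : (X i - C s : R2) ≠ 0 := by
  intro h
  have := degreeOf_lin i s
  rw [h] at this
  simp at this

lemma card_le_degreeOf_prod (i : Fin 2) (A : Finset ℂ) :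
    A.card ≤ degreeOf i (∏ s ∈ A, (X i - C s : R2)) := by
  rw [degreeOf_prod_eq _ _ (fun s _ => lin_ne_zero i s)]
  calc A.card = ∑ s ∈ A, 1 := by simp
    _ ≤ _ := Finset.sum_le_sum fun s _ => degreeOf_lin i s

/-- divide out simple roots -/
lemma exists_divide (u : Polynomial ℂ) (hu : u ≠ 0) (A : Finset ℂ)
    (hA : ∀ s ∈ A, 1 ≤ u.rootMultiplicity s) :
    ∃ v : Polynomial ℂ, v ≠ 0 ∧ u = (∏ s ∈ A, (Polynomial.X - Polynomial.C s)) * v ∧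
      ∀ s, u.rootMultiplicity s ≤ v.rootMultiplicity s + (if s ∈ A then 1 else 0) := by
  classical
  induction A using Finset.induction_on generalizing u with
  | empty => exact ⟨u, hu, by simp, by simp⟩
  | insert a A ha ih =>
    obtain ⟨v, hv, huv, hm⟩ := ih u hu (fun s hs => hA s (Finset.mem_insert_of_mem hs))
    have h1 := hA a (Finset.mem_insert_self _ _)
    have h2 := hm a
    rw [if_neg ha] at h2
    have h3 : v.IsRoot a := by
      rw [← Polynomial.rootMultiplicity_pos hv]; omega
    obtain ⟨w, hw⟩ := Polynomial.dvd_iff_isRoot.2 h3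
    have hw0 : w ≠ 0 := by rintro rfl; simp at hw; exact hv hw
    refine ⟨w, hw0, ?_, ?_⟩
    · rw [Finset.prod_insert ha, huv, hw]; ring
    · intro s
      have h4 := hm s
      have h5 : v.rootMultiplicity s = (if s = a then 1 else 0) + w.rootMultiplicity s := by
        rw [hw, Polynomial.rootMultiplicity_mul (by rw [← hw]; exact hv),
          Polynomial.rootMultiplicity_X_sub_C]
      rw [h5] at h4
      by_cases hs : s = a
      · subst hs
        simp [ha] at h4 ⊢
        omega
      · simp only [Finset.mem_insert, hs, false_or, if_false] at h4 ⊢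
        omega

lemma affine_main (S : Finset (Fin 2 → ℂ)) (m : ℕ) (f : R2) (hf0 : f ≠ 0)
    (hf : ∀ P ∈ S, ((m + 1 : ℕ) : ℕ∞) ≤ ordP P f)
    (hmin : ∀ f' : R2, f' ≠ 0 → (∀ P ∈ S, (m : ℕ∞) ≤ ordP P f') →
      degreeOf 0 f + degreeOf 1 f ≤ degreeOf 0 f' + degreeOf 1 f' + 1) :
    (∃ v, ∀ P ∈ S, P 0 = v) ∨ (∃ w, ∀ P ∈ S, P 1 = w) := by
  classical
  have step1 : ∀ g : R2, Prime g → g ∣ f → degreeOf 0 g = 0 ∨ degreeOf 1 g = 0 := by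
    rintro g hg ⟨f', rfl⟩
    by_contra! hcon
    have hf'0 : f' ≠ 0 := right_ne_zero_of_mul hf0
    obtain ⟨H, hH0, hd0, hd1, hord⟩ := exists_adjoint S g hg (by omega) (by omega)
    have := hmin (H * f') (mul_ne_zero hH0 hf'0) (by
      intro P hP
      have h1 := hf P hP
      rw [ordP_mul] at h1 ⊢
      have h2 := hord P hP
      have h3 : (m : ℕ∞) + 1 ≤ (ordP P H + ordP P f') + 1 := by
        calc (m : ℕ∞) + 1 ≤ ordP P g + ordP P f' := by exact_mod_cast h1
          _ ≤ (ordP P H + 1) + ordP P f' := by gcongr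
          _ = _ := by ring
      exact (ENat.add_le_add_iff_right (by simp)).1 h3)
    rw [degreeOf_mul_eq hg.ne_zero hf'0, degreeOf_mul_eq hg.ne_zero hf'0,
      degreeOf_mul_eq hH0 hf'0, degreeOf_mul_eq hH0 hf'0] at this
    omega
  have step2 : ∀ f : R2, f ≠ 0 →
      (∀ g : R2, Prime g → g ∣ f → degreeOf 0 g = 0 ∨ degreeOf 1 g = 0) →
      ∃ u w, f = emb 0 u * emb 1 w := by
    intro f
    induction f using UniqueFactorizationMonoid.induction_on_prime with
    | h₁ => intro h; exact absurd rfl h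
    | h₂ x hx =>
      intro _ _
      obtain ⟨r, hr, rfl⟩ := (MvPolynomial.isUnit_iff_eq_C_of_isReduced).1 hx
      exact ⟨Polynomial.C r, 1, by simp [emb, algebraMap_eq]⟩
    | h₃ a p ha hp ih =>
      intro _ hall
      obtain ⟨u, w, huw⟩ := ih ha fun g hg hga => hall g hg (hga.mul_left p)
      rcases hall p hp (dvd_mul_right p a) with h | h
      · obtain ⟨t, rfl⟩ := exists_emb (i := 1) (by decide) h
        exact ⟨u, t * w, by rw [huw, emb_mul]; ring⟩
      · obtain ⟨t, rfl⟩ := exists_emb (i := 0) (by decide) h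
        exact ⟨t * u, w, by rw [huw, emb_mul]; ring⟩
  obtain ⟨u, w, rfl⟩ := step2 f hf0 step1
  have hu : u ≠ 0 := by rintro rfl; simp [emb] at hf0
  have hw : w ≠ 0 := by rintro rfl; simp [emb] at hf0
  have hmult : ∀ P ∈ S, m + 1 ≤ u.rootMultiplicity (P 0) + w.rootMultiplicity (P 1) := by
    intro P hP
    have := hf P hP
    rw [ordP_mul, ordP_emb P 0 hu, ordP_emb P 1 hw] at this
    exact_mod_cast this
  let A := u.roots.toFinset
  let B := w.roots.toFinset.filter fun t => m + 1 ≤ w.rootMultiplicity t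
  have hA : ∀ s, s ∈ A ↔ 1 ≤ u.rootMultiplicity s := by
    intro s
    rw [Multiset.mem_toFinset, Polynomial.mem_roots hu, ← Polynomial.rootMultiplicity_pos hu]
    exact Iff.rfl
  have hB : ∀ s, s ∈ B ↔ m + 1 ≤ w.rootMultiplicity s := by
    intro s
    rw [Finset.mem_filter, Multiset.mem_toFinset, Polynomial.mem_roots hw,
      ← Polynomial.rootMultiplicity_pos hw]
    omega
  obtain ⟨u1, hu1, hu2, hu3⟩ := exists_divide u hu A fun s hs => (hA s).1 hs
  obtain ⟨w1, hw1, hw2, hw3⟩ := exists_divide w hw B fun s hs => by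
    have := (hB s).1 hs
    omega
  have hcover : ∀ P ∈ S, P 0 ∈ A ∨ P 1 ∈ B := by
    intro P hP
    rw [hA, hB]
    have := hmult P hP
    omega
  have hfac : emb 0 u * emb 1 w = ((∏ s ∈ A, (X 0 - C s : R2)) * ∏ s ∈ B, (X 1 - C s : R2)) *
      (emb 0 u1 * emb 1 w1) := by
    conv_lhs => rw [hu2, hw2]
    rw [emb_mul, emb_mul, emb_prod, emb_prod]; ring
  have hPA : (∏ s ∈ A, (X 0 - C s : R2)) ≠ 0 := Finset.prod_ne_zero_iff.2 fun s _ => lin_ne_zero 0 s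
  have hPB : (∏ s ∈ B, (X 1 - C s : R2)) ≠ 0 := Finset.prod_ne_zero_iff.2 fun s _ => lin_ne_zero 1 s
  have hne : emb 0 u1 * emb 1 w1 ≠ 0 := by
    intro h
    rw [hfac, h, mul_zero] at hf0
    exact hf0 rfl
  have hmin' := hmin _ hne (by
    intro P hP
    rw [ordP_mul, ordP_emb P 0 hu1, ordP_emb P 1 hw1]
    have h1 := hmult P hP
    have h2 := hu3 (P 0)
    have h3 := hw3 (P 1)
    have h4 := hA (P 0)
    have h5 := hB (P 1)
    have : m ≤ u1.rootMultiplicity (P 0) + w1.rootMultiplicity (P 1) := by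
      split_ifs at h2 h3 with h6 h7 h7
      · rw [h4] at h6; rw [h5] at h7; omega
      · omega
      · omega
      · rw [h4] at h6; rw [h5] at h7; omega
    exact_mod_cast this)
  rw [hfac, degreeOf_mul_eq (mul_ne_zero hPA hPB) hne, degreeOf_mul_eq (mul_ne_zero hPA hPB) hne,
    degreeOf_mul_eq hPA hPB, degreeOf_mul_eq hPA hPB] at hmin'
  have c1 := card_le_degreeOf_prod 0 A
  have c2 := card_le_degreeOf_prod 1 B
  have hcard : A.card + B.card ≤ 1 := by omega
  by_cases hA0 : A.card = 0
  · right
    rw [Finset.card_eq_zero] at hA0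
    rw [hA0] at hcover
    obtain ⟨t, ht⟩ := (Finset.card_le_one_iff_subset_singleton (s := B)).1 (by omega)
    exact ⟨t, fun P hP => by simpa using ht ((hcover P hP).resolve_left (by simp))⟩
  · left
    have hB0 : B.card = 0 := by omega
    rw [Finset.card_eq_zero] at hB0
    rw [hB0] at hcover
    obtain ⟨t, ht⟩ := (Finset.card_le_one_iff_subset_singleton (s := A)).1 (by omega)
    exact ⟨t, fun P hP => by simpa using ht ((hcover P hP).resolve_right (by simp))⟩

/-! ### Passing to an affine chart -/

/-- dehomogenization -/
def deh (t : ℂ) : R4 →ₐ[ℂ] R2 :=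
  aeval (Sum.elim ![1 + C t * X 0, X 0] ![1 + C t * X 1, X 1])

lemma weight_biWeight (d : Fin 2 ⊕ Fin 2 →₀ ℕ) : Finsupp.weight biWeight d =
    (d (Sum.inl 0) + d (Sum.inl 1), d (Sum.inr 0) + d (Sum.inr 1)) := by
  rw [Finsupp.weight_apply, Finsupp.sum_fintype _ _ (by simp)]
  apply Prod.ext <;> simp [biWeight, Fintype.sum_sum_type]

lemma biForm_degrees {F : R4} {p q : ℕ} (hF : IsBiForm F p q) {d : Fin 2 ⊕ Fin 2 →₀ ℕ}
    (hd : d ∈ F.support) :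
    d (Sum.inl 0) + d (Sum.inl 1) = p ∧ d (Sum.inr 0) + d (Sum.inr 1) = q := by
  have := hF (mem_support_iff.1 hd)
  rw [weight_biWeight] at this
  exact Prod.ext_iff.1 this

lemma eval_scale {F : R4} {p q : ℕ} (hF : IsBiForm F p q) (a b : ℂ) (z : Fin 2 ⊕ Fin 2 → ℂ) :
    eval (Sum.elim (fun i => a * z (Sum.inl i)) (fun i => b * z (Sum.inr i))) F =
      a ^ p * b ^ q * eval z F := by
  rw [eval_eq', eval_eq', Finset.mul_sum]
  apply Finset.sum_congr rfl
  intro d hd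
  obtain ⟨h1, h2⟩ := biForm_degrees hF hd
  simp only [Fintype.prod_sum_type, Fin.prod_univ_two, Sum.elim_inl, Sum.elim_inr]
  rw [← h1, ← h2]
  ring

lemma eval_deh (t : ℂ) (F : R4) (x : Fin 2 → ℂ) :
    eval x (deh t F) = eval (Sum.elim ![1 + t * x 0, x 0] ![1 + t * x 1, x 1]) F := by
  have : (eval x).comp (deh t : R4 →+* R2) =
      eval (Sum.elim ![1 + t * x 0, x 0] ![1 + t * x 1, x 1]) := by
    apply MvPolynomial.ringHom_ext
    · intro r; simp
    · rintro (i | i) <;> fin_cases i <;> simp [deh]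
  exact DFunLike.congr_fun this F

/-- the linear forms which become `1` -/
def lam0 (t : ℂ) : R4 := X (Sum.inl 0) - C t * X (Sum.inl 1)
def lam1 (t : ℂ) : R4 := X (Sum.inr 0) - C t * X (Sum.inr 1)

lemma deh_lam0 (t : ℂ) : deh t (lam0 t) = 1 := by simp [deh, lam0]
lemma deh_lam1 (t : ℂ) : deh t (lam1 t) = 1 := by simp [deh, lam1]

lemma deh_injective (t : ℂ) {F : R4} {p q : ℕ} (hF : IsBiForm F p q) (h : deh t F = 0) : F = 0 := by
  by_contra hF0
  have h0 : lam0 t ≠ 0 := by intro h; simpa [h] using deh_lam0 t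
  have h1 : lam1 t ≠ 0 := by intro h; simpa [h] using deh_lam1 t
  apply mul_ne_zero (mul_ne_zero hF0 h0) h1
  apply MvPolynomial.funext
  intro z
  rw [map_zero, map_mul, map_mul]
  by_cases ha : eval z (lam0 t) = 0
  · simp [ha]
  by_cases hb : eval z (lam1 t) = 0
  · simp [hb]
  have e := eval_deh t F ![z (Sum.inl 1) / eval z (lam0 t), z (Sum.inr 1) / eval z (lam1 t)]
  rw [h, map_zero] at e
  have e2 := eval_scale hF (eval z (lam0 t)) (eval z (lam1 t))
    (Sum.elim ![1 + t * (z (Sum.inl 1) / eval z (lam0 t)), z (Sum.inl 1) / eval z (lam0 t)]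
      ![1 + t * (z (Sum.inr 1) / eval z (lam1 t)), z (Sum.inr 1) / eval z (lam1 t)])
  simp only [Matrix.cons_val_zero, Matrix.cons_val_one] at e
  rw [← e, mul_zero] at e2
  have e3 : (Sum.elim (fun i => eval z (lam0 t) * (Sum.elim ![1 + t * (z (Sum.inl 1) / eval z (lam0 t)), z (Sum.inl 1) / eval z (lam0 t)]
      ![1 + t * (z (Sum.inr 1) / eval z (lam1 t)), z (Sum.inr 1) / eval z (lam1 t)]) (Sum.inl i))
      (fun i => eval z (lam1 t) * (Sum.elim ![1 + t * (z (Sum.inl 1) / eval z (lam0 t)), z (Sum.inl 1) / eval z (lam0 t)]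
      ![1 + t * (z (Sum.inr 1) / eval z (lam1 t)), z (Sum.inr 1) / eval z (lam1 t)]) (Sum.inr i)) :
      Fin 2 ⊕ Fin 2 → ℂ) = z := by
    have l0 : eval z (lam0 t) = z (Sum.inl 0) - t * z (Sum.inl 1) := by simp [lam0]
    have l1 : eval z (lam1 t) = z (Sum.inr 0) - t * z (Sum.inr 1) := by simp [lam1]
    funext i
    rcases i with i | i <;> fin_cases i
    · simp only [Sum.elim_inl, Fin.zero_eta, Matrix.cons_val_zero]
      field_simp
      rw [l0]; ring
    · change eval z (lam0 t) * (z (Sum.inl 1) / eval z (lam0 t)) = z (Sum.inl 1)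
      field_simp
    · simp only [Sum.elim_inr, Fin.zero_eta, Matrix.cons_val_zero]
      field_simp
      rw [l1]; ring
    · change eval z (lam1 t) * (z (Sum.inr 1) / eval z (lam1 t)) = z (Sum.inr 1)
      field_simp
  rw [e3] at e2
  rw [e2]; simp

lemma degreeOf_one_add (t : ℂ) (i j : Fin 2) :
    degreeOf j (1 + C t * X i : R2) ≤ if j = i then 1 else 0 := by
  refine (degreeOf_add_le _ _ _).trans (max_le (by simp) ?_)
  refine (degreeOf_C_mul_le _ _ _).trans ?_
  rw [degreeOf_X]

lemma degreeOf_X' (i j : Fin 2) : degreeOf j (X i : R2) ≤ if j = i then 1 else 0 := by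
  rw [degreeOf_X]

lemma degreeOf_deh (t : ℂ) {F : R4} {p q : ℕ} (hF : IsBiForm F p q) :
    degreeOf 0 (deh t F) ≤ p ∧ degreeOf 1 (deh t F) ≤ q := by
  have key : ∀ j : Fin 2, degreeOf j (deh t F) ≤ if j = 0 then p else q := by
    intro j
    rw [deh, aeval_def, eval₂_eq']
    refine (degreeOf_sum_le _ _ _).trans (Finset.sup_le fun d hd => ?_)
    obtain ⟨h1, h2⟩ := biForm_degrees hF hd
    rw [algebraMap_eq]
    refine (degreeOf_C_mul_le _ _ _).trans ?_
    simp only [Fintype.prod_sum_type, Fin.prod_univ_two, Sum.elim_inl, Sum.elim_inr,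
      Matrix.cons_val_zero, Matrix.cons_val_one]
    refine (degreeOf_mul_le _ _ _).trans ((add_le_add ((degreeOf_mul_le _ _ _).trans
      (add_le_add (degreeOf_pow_le _ _ _) (degreeOf_pow_le _ _ _))) ((degreeOf_mul_le _ _ _).trans
      (add_le_add (degreeOf_pow_le _ _ _) (degreeOf_pow_le _ _ _)))).trans ?_)
    have a1 := degreeOf_one_add t 0 j
    have a2 := degreeOf_one_add t 1 j
    have a3 := degreeOf_X' 0 j
    have a4 := degreeOf_X' 1 j
    grw [a1, a2, a3, a4]
    fin_cases j <;> simp <;> omega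
  exact ⟨key 0, key 1⟩

lemma degreeOf_tau (P : Fin 2 → ℂ) (f : R2) (j : Fin 2) : degreeOf j (tau P f) ≤ degreeOf j f := by
  rw [tau, aeval_def, eval₂_eq']
  refine (degreeOf_sum_le _ _ _).trans (Finset.sup_le fun d hd => ?_)
  rw [algebraMap_eq]
  refine (degreeOf_C_mul_le _ _ _).trans ?_
  have h1 := monomial_le_degreeOf j hd
  have hb : ∀ i : Fin 2, degreeOf j (X i + C (P i) : R2) ≤ if j = i then 1 else 0 := by
    intro i
    refine (degreeOf_add_le _ _ _).trans (max_le (degreeOf_X' i j) (by simp))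
  rw [Fin.prod_univ_two]
  refine (degreeOf_mul_le _ _ _).trans ((add_le_add (degreeOf_pow_le _ _ _)
    (degreeOf_pow_le _ _ _)).trans ?_)
  grw [hb 0, hb 1]
  fin_cases j <;> simp at h1 ⊢ <;> omega

def lin0 (t c : ℂ) : R4 := X (Sum.inl 1) - C c * lam0 t
def lin1 (t c : ℂ) : R4 := X (Sum.inr 1) - C c * lam1 t

lemma homog_X (i : Fin 2 ⊕ Fin 2) : IsWeightedHomogeneous biWeight (X i : R4) (biWeight i) :=
  isWeightedHomogeneous_X _ _ _

lemma homog_C_mul {F : R4} {w : ℕ × ℕ} (c : ℂ) (h : IsWeightedHomogeneous biWeight F w) :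
    IsWeightedHomogeneous biWeight (C c * F) w := by
  simpa using (isWeightedHomogeneous_C biWeight c).mul h

lemma homog_sub {F G : R4} {w : ℕ × ℕ} (h : IsWeightedHomogeneous biWeight F w)
    (h' : IsWeightedHomogeneous biWeight G w) : IsWeightedHomogeneous biWeight (F - G) w :=
  (weightedHomogeneousSubmodule ℂ biWeight w).sub_mem h h'

lemma homog_lam0 (t : ℂ) : IsWeightedHomogeneous biWeight (lam0 t) (1, 0) :=
  homog_sub (homog_X _) (homog_C_mul _ (homog_X (Sum.inl 1)))
lemma homog_lam1 (t : ℂ) : IsWeightedHomogeneous biWeight (lam1 t) (0, 1) :=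
  homog_sub (homog_X _) (homog_C_mul _ (homog_X (Sum.inr 1)))
lemma homog_lin0 (t c : ℂ) : IsWeightedHomogeneous biWeight (lin0 t c) (1, 0) :=
  homog_sub (homog_X _) (homog_C_mul _ (homog_lam0 t))
lemma homog_lin1 (t c : ℂ) : IsWeightedHomogeneous biWeight (lin1 t c) (0, 1) :=
  homog_sub (homog_X _) (homog_C_mul _ (homog_lam1 t))

lemma deh_lin0 (t c : ℂ) : deh t (lin0 t c) = X 0 - C c := by
  rw [lin0, map_sub, map_mul, deh_lam0]; simp [deh]
lemma deh_lin1 (t c : ℂ) : deh t (lin1 t c) = X 1 - C c := by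
  rw [lin1, map_sub, map_mul, deh_lam1]; simp [deh]

lemma exists_homogenization (t : ℂ) (P : Fin 2 → ℂ) (m : ℕ) (f : R2) {p q : ℕ}
    (h0 : degreeOf 0 f ≤ p) (h1 : degreeOf 1 f ≤ q) (hm : (m : ℕ∞) ≤ ordP P f) (J : Ideal R4)
    (hJ0 : lin0 t (P 0) ∈ J) (hJ1 : lin1 t (P 1) ∈ J) :
    ∃ F : R4, IsBiForm F p q ∧ deh t F = f ∧ F ∈ J ^ m := by
  rw [le_ordP_iff] at hm
  refine ⟨∑ d ∈ (tau P f).support, C (coeff d (tau P f)) *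
    ((lin0 t (P 0) ^ d 0 * lin1 t (P 1) ^ d 1) * (lam0 t ^ (p - d 0) * lam1 t ^ (q - d 1))),
    ?_, ?_, ?_⟩
  · apply IsWeightedHomogeneous.sum
    intro d hd
    apply homog_C_mul
    have := (((homog_lin0 t (P 0)).pow (d 0)).mul ((homog_lin1 t (P 1)).pow (d 1))).mul
      (((homog_lam0 t).pow (p - d 0)).mul ((homog_lam1 t).pow (q - d 1)))
    convert this using 1
    have e0 := (monomial_le_degreeOf 0 hd).trans ((degreeOf_tau P f 0).trans h0)
    have e1 := (monomial_le_degreeOf 1 hd).trans ((degreeOf_tau P f 1).trans h1)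
    simp
    omega
  · conv_rhs => rw [← tau_tau P f]
    generalize tau P f = g
    conv_rhs => rw [tau, aeval_def, eval₂_eq']
    rw [map_sum]
    apply Finset.sum_congr rfl
    intro d _
    simp only [map_mul, map_pow, deh_lin0, deh_lin1, deh_lam0, deh_lam1, Fin.prod_univ_two]
    simp [algebraMap_eq, deh, sub_eq_add_neg]
  · apply Ideal.sum_mem
    intro d hd
    apply Ideal.mul_mem_left
    apply Ideal.mul_mem_right
    have hdeg : m ≤ d 0 + d 1 := by
      by_contra hlt
      exact (mem_support_iff.1 hd) (hm d (by simp [Finsupp.degree_eq_sum]; omega))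
    apply Ideal.pow_le_pow_right hdeg
    rw [pow_add]
    exact Ideal.mul_mem_mul (Ideal.pow_mem_pow hJ0 _) (Ideal.pow_mem_pow hJ1 _)

/-- affine coordinate -/
def aff (t : ℂ) (v : ProjLine) : ℂ := v.rep 1 / (v.rep 0 - t * v.rep 1)

lemma aff_injective (t : ℂ) {v w : ProjLine} (hv : v.rep 0 - t * v.rep 1 ≠ 0)
    (hw : w.rep 0 - t * w.rep 1 ≠ 0) (h : aff t v = aff t w) : v = w := by
  rw [← v.mk_rep, ← w.mk_rep, Projectivization.mk_eq_mk_iff']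
  refine ⟨(v.rep 0 - t * v.rep 1) / (w.rep 0 - t * w.rep 1), ?_⟩
  rw [aff, aff, div_eq_div_iff hv hw] at h
  funext i
  simp only [Pi.smul_apply, smul_eq_mul]
  fin_cases i
  · simp only [Fin.zero_eta]
    field_simp
    linear_combination (-t) * h
  · simp only [Fin.mk_one]
    field_simp
    linear_combination -h

lemma exists_good (A : Finset ProjLine) : ∃ t : ℂ, ∀ v ∈ A, v.rep 0 - t * v.rep 1 ≠ 0 := by
  classical
  obtain ⟨t, ht⟩ := Infinite.exists_notMem_finset (A.image fun v => v.rep 0 / v.rep 1)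
  refine ⟨t, fun v hv h => ?_⟩
  by_cases h1 : v.rep 1 = 0
  · apply v.rep_nonzero
    rw [h1] at h
    funext i
    fin_cases i
    · simpa using h
    · exact h1
  · apply ht
    rw [Finset.mem_image]
    refine ⟨v, hv, ?_⟩
    field_simp
    linear_combination h

lemma lin0_mem (t : ℂ) (P : ProjLine × ProjLine) (h : P.1.rep 0 - t * P.1.rep 1 ≠ 0) :
    lin0 t (aff t P.1) ∈ pointIdeal P := by
  have h1 : lin0 t (aff t P.1) = C (-(P.1.rep 0 - t * P.1.rep 1)⁻¹) *
      (C (P.1.rep 1) * X (Sum.inl 0) - C (P.1.rep 0) * X (Sum.inl 1)) := by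
    have e : (C (P.1.rep 0 - t * P.1.rep 1) : R4) * C ((P.1.rep 0 - t * P.1.rep 1)⁻¹) = 1 := by
      rw [← C_mul, mul_inv_cancel₀ h, C_1]
    rw [C_sub, C_mul] at e
    rw [lin0, aff, lam0, div_eq_mul_inv, C_mul, C_neg]
    linear_combination (- X (Sum.inl 1)) * e
  rw [h1]
  exact Ideal.mul_mem_left _ _ (Ideal.subset_span (by simp))

lemma lin1_mem (t : ℂ) (P : ProjLine × ProjLine) (h : P.2.rep 0 - t * P.2.rep 1 ≠ 0) :
    lin1 t (aff t P.2) ∈ pointIdeal P := by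
  have h1 : lin1 t (aff t P.2) = C (-(P.2.rep 0 - t * P.2.rep 1)⁻¹) *
      (C (P.2.rep 1) * X (Sum.inr 0) - C (P.2.rep 0) * X (Sum.inr 1)) := by
    have e : (C (P.2.rep 0 - t * P.2.rep 1) : R4) * C ((P.2.rep 0 - t * P.2.rep 1)⁻¹) = 1 := by
      rw [← C_mul, mul_inv_cancel₀ h, C_1]
    rw [C_sub, C_mul] at e
    rw [lin1, aff, lam1, div_eq_mul_inv, C_mul, C_neg]
    linear_combination (- X (Sum.inr 1)) * e
  rw [h1]
  exact Ideal.mul_mem_left _ _ (Ideal.subset_span (by simp))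

lemma ordIdeal_one_pow (Q : Fin 2 → ℂ) (m : ℕ) : ordIdeal Q 1 ^ m ≤ ordIdeal Q m := by
  induction m with
  | zero => intro f _; rw [mem_ordIdeal]; simp
  | succ m ih =>
    rw [pow_succ, Ideal.mul_le]
    intro r hr s hs
    rw [mem_ordIdeal, ordP_mul]
    push_cast
    exact add_le_add (mem_ordIdeal.1 (ih hr)) (by simpa using mem_ordIdeal.1 hs)

lemma le_ordP_deh (t : ℂ) (P : ProjLine × ProjLine) (h1 : P.1.rep 0 - t * P.1.rep 1 ≠ 0)
    (h2 : P.2.rep 0 - t * P.2.rep 1 ≠ 0) (m : ℕ) {F : R4} (hF : F ∈ pointIdeal P ^ m) :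
    (m : ℕ∞) ≤ ordP ![aff t P.1, aff t P.2] (deh t F) := by
  have hle : (pointIdeal P).map (deh t) ≤ ordIdeal ![aff t P.1, aff t P.2] 1 := by
    rw [pointIdeal, Ideal.map_span, Ideal.span_le]
    rintro _ ⟨G, hG, rfl⟩
    simp only [Set.mem_insert_iff, Set.mem_singleton_iff] at hG
    rw [SetLike.mem_coe, mem_ordIdeal, Nat.cast_one, Order.one_le_iff_ne_zero, ne_eq,
      ordP_eq_zero_iff, not_not]
    rcases hG with rfl | rfl
    · have e : aff t P.1 * (P.1.rep 0 - t * P.1.rep 1) = P.1.rep 1 := div_mul_cancel₀ _ h1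
      simp [deh]
      linear_combination -e
    · have e : aff t P.2 * (P.2.rep 0 - t * P.2.rep 1) = P.2.rep 1 := div_mul_cancel₀ _ h2
      simp [deh]
      linear_combination -e
  have := Ideal.mem_map_of_mem (deh t) hF
  rw [Ideal.map_pow] at this
  exact mem_ordIdeal.1 (ordIdeal_one_pow _ m (Ideal.pow_right_mono hle m this))

/-- If for the radical ideal `I` of a finite set `Z` of distinct points of `ℙ¹ × ℙ¹` one has
`α⁺(I^{(m+1)}) = α⁺(I^{(m)}) + 1` for some `m ≥ 1`, then all points of `Z` lie on a single
vertical or horizontal fiber: they all share the first coordinate or all share the second. -/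
theorem alphaPlus_jump_one_fiber (Z : Finset (ProjLine × ProjLine)) (m : ℕ) (hm : 1 ≤ m)
    (h : alphaPlus (symbPow Z (m + 1)) = alphaPlus (symbPow Z m) + 1) :
    (∃ v : ProjLine, ∀ P ∈ Z, P.1 = v) ∨ (∃ w : ProjLine, ∀ P ∈ Z, P.2 = w) := by
  classical
  rcases Z.eq_empty_or_nonempty with rfl | ⟨P₀, hP₀⟩
  · left
    exact ⟨Projectivization.mk ℂ ![1, 0] (by
      intro h0
      simpa using congrFun h0 0), by simp⟩
  obtain ⟨t, ht⟩ := exists_good (Z.image Prod.fst ∪ Z.image Prod.snd)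
  have ht1 : ∀ P ∈ Z, P.1.rep 0 - t * P.1.rep 1 ≠ 0 := fun P hP =>
    ht _ (Finset.mem_union_left _ (Finset.mem_image_of_mem _ hP))
  have ht2 : ∀ P ∈ Z, P.2.rep 0 - t * P.2.rep 1 ≠ 0 := fun P hP =>
    ht _ (Finset.mem_union_right _ (Finset.mem_image_of_mem _ hP))
  have hsymb : ∀ (k : ℕ) (F : R4), F ∈ symbPow Z k ↔ ∀ P ∈ Z, F ∈ pointIdeal P ^ k := by
    intro k F
    simp [symbPow, Ideal.mem_iInf]
  have hne : {d : ℕ | ∃ p q : ℕ, p + q = d ∧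
      ∃ F ∈ symbPow Z (m + 1), F ≠ 0 ∧ IsBiForm F p q}.Nonempty := by
    apply Nat.nonempty_of_pos_sInf
    change 0 < alphaPlus _
    omega
  obtain ⟨p, q, hpq, F, hFmem, hF0, hF⟩ := Nat.sInf_mem hne
  change p + q = alphaPlus _ at hpq
  rw [hsymb] at hFmem
  have hdeg := degreeOf_deh t hF
  have main := affine_main (Z.image fun P => ![aff t P.1, aff t P.2]) m (deh t F)
    (fun h0 => hF0 (deh_injective t hF h0))
    (by
      intro Q hQ
      obtain ⟨P, hP, rfl⟩ := Finset.mem_image.1 hQ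
      exact le_ordP_deh t P (ht1 P hP) (ht2 P hP) (m + 1) (hFmem P hP))
    (by
      intro f' hf' hord
      have hex : ∀ P ∈ Z, ∃ G : R4, IsBiForm G (degreeOf 0 f') (degreeOf 1 f') ∧ deh t G = f' ∧
          G ∈ pointIdeal P ^ m := fun P hP =>
        exists_homogenization t ![aff t P.1, aff t P.2] m f' le_rfl le_rfl
          (hord _ (Finset.mem_image_of_mem _ hP)) (pointIdeal P)
          (lin0_mem t P (ht1 P hP)) (lin1_mem t P (ht2 P hP))
      obtain ⟨G, hG, hGf, -⟩ := hex P₀ hP₀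
      have hGmem : G ∈ symbPow Z m := by
        rw [hsymb]
        intro P hP
        obtain ⟨G', hG', hGf', hmem⟩ := hex P hP
        have : G - G' = 0 := deh_injective t (homog_sub hG hG') (by rw [map_sub, hGf, hGf', sub_self])
        rw [sub_eq_zero.1 this]
        exact hmem
      have hle : alphaPlus (symbPow Z m) ≤ degreeOf 0 f' + degreeOf 1 f' :=
        Nat.sInf_le ⟨_, _, rfl, G, hGmem, (by rintro rfl; simp at hGf; exact hf' hGf.symm), hG⟩
      omega)
  rcases main with ⟨v, hv⟩ | ⟨w, hw⟩
  · left
    refine ⟨P₀.1, fun P hP => aff_injective t (ht1 P hP) (ht1 P₀ hP₀) ?_⟩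
    have a1 := hv _ (Finset.mem_image_of_mem _ hP)
    have a2 := hv _ (Finset.mem_image_of_mem _ hP₀)
    exact a1.trans a2.symm
  · right
    refine ⟨P₀.2, fun P hP => aff_injective t (ht2 P hP) (ht2 P₀ hP₀) ?_⟩
    have a1 := hw _ (Finset.mem_image_of_mem _ hP)
    have a2 := hw _ (Finset.mem_image_of_mem _ hP₀)
    exact a1.trans a2.symm
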